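/- The braid shelf is left cancellative: for all β, γ, γ' ∈ B_∞, if β ▷ γ = β ▷ γ' then γ = γ'. -/

import Mathlib

/-- The braid relations on generators indexed by `ℕ` (generator `i` stands for
the Artin generator `σ_{i+1}` of the paper). -/
def braidRels : Set (FreeGroup ℕ) :=
  {r | (∃ i j : ℕ, i + 2 ≤ j ∧
          r = .of i * .of j * (.of i)⁻¹ * (.of j)⁻¹) ∨
       (∃ i : ℕ,
          r = .of i * .of (i + 1) * .of i *
              (.of (i + 1) * .of i * .of (i + 1))⁻¹)}

/-- The braid group on infinitely many strands. -/
abbrev Binf : Type := PresentedGroup braidRels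

/-- `σ i` is the Artin generator `σ_{i+1}` of the paper (0-indexed). -/
def σ (i : ℕ) : Binf := PresentedGroup.of i

lemma mk_rel_eq_one {r : FreeGroup ℕ} (h : r ∈ braidRels) :
    PresentedGroup.mk braidRels r = 1 :=
  (QuotientGroup.eq_one_iff r).mpr (Subgroup.subset_normalClosure h)

lemma shift_lift_eq_one :
    ∀ r ∈ braidRels, FreeGroup.lift (fun n => σ (n + 1)) r = 1 := by
  intro r hr
  have key : ∀ s ∈ braidRels, FreeGroup.lift (fun n => σ (n + 1)) s
      = PresentedGroup.mk braidRels (FreeGroup.map (· + 1) s) := by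
    intro s _
    have : (FreeGroup.lift (fun n => σ (n + 1)) : FreeGroup ℕ →* Binf)
        = (PresentedGroup.mk braidRels).comp (FreeGroup.map (· + 1)) := by
      apply FreeGroup.ext_hom
      intro x
      simp [σ, PresentedGroup.of]
    rw [this]; rfl
  rw [key r hr]
  apply mk_rel_eq_one
  rcases hr with ⟨i, j, hij, rfl⟩ | ⟨i, rfl⟩
  · exact Or.inl ⟨i + 1, j + 1, by omega, by simp⟩
  · exact Or.inr ⟨i + 1, by simp⟩

/-- The shift endomorphism of the braid group, mapping `σ i` to `σ (i+1)`. -/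
def sh : Binf →* Binf := PresentedGroup.toGroup shift_lift_eq_one

@[simp] lemma sh_σ (i : ℕ) : sh (σ i) = σ (i + 1) :=
  PresentedGroup.toGroup.of shift_lift_eq_one

/-- The shifted-conjugation (selfdistributive) operation on `Binf`:
`β₁ ▷ β₂ = β₁ · sh β₂ · σ₁ · (sh β₁)⁻¹`. -/
def sc (β₁ β₂ : Binf) : Binf := β₁ * sh β₂ * σ 0 * (sh β₁)⁻¹

lemma σ_comm (i j : ℕ) (h : i + 2 ≤ j) : σ i * σ j = σ j * σ i := by
  have := mk_rel_eq_one (Or.inl ⟨i, j, h, rfl⟩)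
  simp only [map_mul, map_inv] at this
  rw [mul_inv_eq_one, mul_inv_eq_iff_eq_mul] at this
  exact this

lemma σ_braid (i : ℕ) : σ i * σ (i + 1) * σ i = σ (i + 1) * σ i * σ (i + 1) := by
  have := mk_rel_eq_one (Or.inr ⟨i, rfl⟩)
  simp only [map_mul, map_inv] at this
  rw [mul_inv_eq_one] at this
  exact this

/-- The product `σ 0 * ⋯ * σ (n-1)`. -/
def cyc : ℕ → Binf
  | 0 => 1
  | n + 1 => cyc n * σ n

lemma cyc_comm (n j : ℕ) (h : n + 1 ≤ j) : cyc n * σ j = σ j * cyc n := by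
  induction n with
  | zero => simp [cyc]
  | succ n ih =>
    rw [cyc, mul_assoc, σ_comm n j (by omega), ← mul_assoc, ih (by omega), mul_assoc]

lemma cyc_shift (n i : ℕ) (h : i + 2 ≤ n) : cyc n * σ i = σ (i + 1) * cyc n := by
  induction n with
  | zero => omega
  | succ n ih =>
    rcases Nat.lt_or_ge n (i + 2) with h' | h'
    · obtain rfl : n = i + 1 := by omega
      have e : cyc (i + 1 + 1) = cyc i * σ i * σ (i + 1) := rfl
      calc cyc (i + 1 + 1) * σ i = cyc i * (σ i * σ (i + 1) * σ i) := by
            rw [e]; simp only [mul_assoc]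
        _ = (cyc i * σ (i + 1)) * σ i * σ (i + 1) := by rw [σ_braid]; simp only [mul_assoc]
        _ = σ (i + 1) * cyc (i + 1 + 1) := by
            rw [cyc_comm i (i + 1) le_rfl, e]; simp only [mul_assoc]
    · rw [cyc, mul_assoc, ← σ_comm i n h', ← mul_assoc, ih h', mul_assoc]

lemma sh_eq_conj (γ : Binf) : ∃ N, ∀ n, N ≤ n → sh γ = cyc n * γ * (cyc n)⁻¹ := by
  have hγ : γ ∈ Subgroup.closure (Set.range (PresentedGroup.of (rels := braidRels))) := by
    rw [PresentedGroup.closure_range_of]; trivial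
  induction hγ using Subgroup.closure_induction with
  | mem x hx =>
    obtain ⟨i, rfl⟩ := hx
    refine ⟨i + 2, fun n hn => ?_⟩
    change sh (σ i) = cyc n * σ i * (cyc n)⁻¹
    rw [sh_σ, cyc_shift n i hn]; simp
  | one => exact ⟨0, fun n _ => by simp⟩
  | mul x y _ _ hx hy =>
    obtain ⟨N, hN⟩ := hx
    obtain ⟨M, hM⟩ := hy
    refine ⟨max N M, fun n hn => ?_⟩
    rw [map_mul, hN n (le_trans (le_max_left _ _) hn), hM n (le_trans (le_max_right _ _) hn)]
    group
  | inv x _ hx =>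
    obtain ⟨N, hN⟩ := hx
    refine ⟨N, fun n hn => ?_⟩
    rw [map_inv, hN n hn]; group

lemma sh_injective : Function.Injective sh := by
  rw [injective_iff_map_eq_one]
  intro γ h
  obtain ⟨N, hN⟩ := sh_eq_conj γ
  rw [hN N le_rfl] at h
  exact conj_eq_one_iff.mp h

/-- the braid shelf is left cancellative. -/
theorem braid_shelf_left_cancellative (β γ γ' : Binf) (h : sc β γ = sc β γ') :
    γ = γ' := by
  apply sh_injective
  simpa [sc] using h
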